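/- Fix a real number $\hbar>0$ and an integer $N\ge 2$; write $i$ for the imaginary unit, $\Gamma$ for the complex Gamma function and $\hbar^z:=\exp(z\log\hbar)$. Let $\gamma=(\gamma_{nj})_{1\le j\le n\le N}$ be an array of complex numbers and let $e_{nj}$ be the array equal to $1$ in position $(n,j)$ and $0$ elsewhere. For functions $f$ of such arrays and $1\le n\le N-1$ put $$(E_{n,n+1}f)(\gamma)=-\frac{1}{i\hbar}\sum_{j=1}^{n}\frac{\prod_{r=1}^{n+1}\left(\gamma_{nj}-\gamma_{n+1,r}-\frac{i\hbar}{2}\right)}{\prod_{s\le n,\,s\ne j}(\gamma_{nj}-\gamma_{ns})}\,f(\gamma-i\hbar e_{nj}),$$ $$(E_{n+1,n}f)(\gamma)=\frac{1}{i\hbar}\sum_{j=1}^{n}\frac{\prod_{r=1}^{n-1}\left(\gamma_{nj}-\gamma_{n-1,r}+\frac{i\hbar}{2}\right)}{\prod_{s\le n,\,s\ne j}(\gamma_{nj}-\gamma_{ns})}\,f(\gamma+i\hbar e_{nj}),$$ and define $w_N'(\gamma)=1$ and $$w_N(\gamma)=\exp\Big(-\frac{\pi}{\hbar}\sum_{n=1}^{N-1}(n-1)\sum_{j=1}^{n}\gamma_{nj}\Big)\prod_{n=1}^{N-1}\prod_{k=1}^{n}\prod_{m=1}^{n+1}\hbar^{\frac{\gamma_{nk}-\gamma_{n+1,m}}{i\hbar}+\frac12}\,\Gamma\Big(\frac{\gamma_{nk}-\gamma_{n+1,m}}{i\hbar}+\frac12\Big).$$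 Suppose that for every $1\le n\le N-1$ the number $(\gamma_{nj}-\gamma_{ns})/(i\hbar)$ is not an integer for all $1\le j<s\le n$ (that is, $\gamma$ is non-resonant), and that $(\gamma_{nk}-\gamma_{n+1,m})/(i\hbar)+\frac12$ is not an integer for all $1\le k\le n$, $1\le m\le n+1$. Then for every $1\le n\le N-1$ the Whittaker vector equations $$(E_{n,n+1}w_N)(\gamma)=-i\hbar^{-1}\,w_N(\gamma),\qquad (E_{n+1,n}w_N')(\gamma)=-i\hbar^{-1}\,w_N'(\gamma)$$ hold; the first one says explicitly that $$\sum_{j=1}^{n}\frac{\prod_{r=1}^{n+1}\left(\gamma_{nj}-\gamma_{n+1,r}-\frac{i\hbar}{2}\right)}{\prod_{s\le n,\,s\ne j}(\gamma_{nj}-\gamma_{ns})}\,w_N(\gamma-i\hbar e_{nj})=-w_N(\gamma).$$ -/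

import Mathlib

open Finset

noncomputable section

/-- A Gelfand–Zetlin array: complex values `γ n j`, relevant for `1 ≤ j ≤ n ≤ N`. -/
abbrev GZ := ℕ → ℕ → ℂ

/-- Shift of the single variable `γ n j` by `c`. -/
def gzShift (c : ℂ) (n j : ℕ) (γ : GZ) : GZ :=
  fun a b => if a = n ∧ b = j then γ a b + c else γ a b

/-- The raising Gelfand–Zetlin operator `E_{n,n+1}`. -/
def Eraise (ℏ : ℝ) (n : ℕ) (f : GZ → ℂ) : GZ → ℂ := fun γ =>
  -(1 / (Complex.I * ℏ)) * ∑ j ∈ Icc 1 n,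
    ((∏ r ∈ Icc 1 (n + 1), (γ n j - γ (n + 1) r - Complex.I * ℏ / 2)) /
      ∏ s ∈ (Icc 1 n).erase j, (γ n j - γ n s)) * f (gzShift (-(Complex.I * ℏ)) n j γ)

/-- The lowering Gelfand–Zetlin operator `E_{n+1,n}` (for `n ≥ 1`; the numerator is the empty
product when `n = 1`). -/
def Elower (ℏ : ℝ) (n : ℕ) (f : GZ → ℂ) : GZ → ℂ := fun γ =>
  1 / (Complex.I * ℏ) * ∑ j ∈ Icc 1 n,
    ((∏ r ∈ Icc 1 (n - 1), (γ n j - γ (n - 1) r + Complex.I * ℏ / 2)) /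
      ∏ s ∈ (Icc 1 n).erase j, (γ n j - γ n s)) * f (gzShift (Complex.I * ℏ) n j γ)

/-- Non-resonance: no two same-level entries below the top row differ by an integer multiple
of `iℏ`. -/
def NonResonant (ℏ : ℝ) (N : ℕ) (γ : GZ) : Prop :=
  ∀ n ∈ Icc 1 (N - 1), ∀ j s : ℕ, 1 ≤ j → j < s → s ≤ n →
    ∀ m : ℤ, (γ n j - γ n s) / (Complex.I * ℏ) ≠ (m : ℂ)

/-- `ℏ^z := exp(z log ℏ)`. -/
def hpow (ℏ : ℝ) (z : ℂ) : ℂ := Complex.exp (z * (Real.log ℏ : ℂ))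

/-- The factor `s_n(γ_n, γ_{n+1})`. -/
def sW (ℏ : ℝ) (n : ℕ) (γ : GZ) : ℂ :=
  ∏ k ∈ Icc 1 n, ∏ m ∈ Icc 1 (n + 1),
    hpow ℏ ((γ n k - γ (n + 1) m) / (Complex.I * ℏ) + 1 / 2) *
      Complex.Gamma ((γ n k - γ (n + 1) m) / (Complex.I * ℏ) + 1 / 2)

/-- The Whittaker vector `w_N` of the raising operators. -/
def wWhit (ℏ : ℝ) (N : ℕ) (γ : GZ) : ℂ :=
  Complex.exp (-((Real.pi / ℏ : ℝ) : ℂ) *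
      ∑ n ∈ Icc 1 (N - 1), ((n : ℂ) - 1) * ∑ j ∈ Icc 1 n, γ n j) *
    ∏ n ∈ Icc 1 (N - 1), sW ℏ n γ

/-- The Whittaker vector `w'_N = 1` of the lowering operators. -/
def wWhit' : GZ → ℂ := fun _ => 1

end

/-!
Put `x = γ_{nk} - γ_{n+1,m}`, so that `s_n` is a product of factors `g(x) = ℏ^z Γ(z)` with
`z = x/(iℏ) + 1/2`. The functional equation of `Γ` reads `g(x + iℏ) = -i (x + iℏ/2) g(x)`. The shift
`γ_{nj} ↦ γ_{nj} - iℏ` lowers the arguments of `n + 1` factors of `s_n`, which absorbs the numerator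
of the coefficient of `E_{n,n+1}`, and raises those of `n - 1` factors of `s_{n-1}`, which produces
`∏_r (γ_{nj} - γ_{n-1,r} - iℏ/2)`; the exponential prefactor contributes the sign turning the powers
of `i` into `-1`. Both eigenvalue equations then reduce to the fact that the divided difference of
a monic polynomial of degree `n - 1` at `n` distinct nodes is `1`.
-/

section FiniteSumsAndProducts

theorem mul_prod_eq_mul_prod_of_subset {ι M : Type*} [CommMonoid M] [DecidableEq ι]
    {s t : Finset ι} {f g : ι → M} {a b : M} (hts : t ⊆ s)
    (ht : a * ∏ i ∈ t, f i = b * ∏ i ∈ t, g i) (hfg : ∀ i ∈ s \ t, f i = g i) :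
    a * ∏ i ∈ s, f i = b * ∏ i ∈ s, g i := by
  rw [← prod_sdiff hts, ← prod_sdiff hts, prod_congr rfl hfg, mul_left_comm, ht, mul_left_comm]

theorem sum_prod_sub_div_prod_erase_sub {ι κ F : Type*} [DecidableEq ι] [Field F]
    {s : Finset ι} {t : Finset κ} (hcard : #s = #t + 1) {x : ι → F} (hx : Set.InjOn x s)
    (y : κ → F) :
    ∑ j ∈ s, (∏ k ∈ t, (x j - y k)) / ∏ i ∈ s.erase j, (x j - x i) = 1 := by
  have hmonic : (∏ k ∈ t, (Polynomial.X - Polynomial.C (y k))).Monic :=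
    Polynomial.monic_prod_X_sub_C y t
  have hdeg : (#s : WithBot ℕ) = (∏ k ∈ t, (Polynomial.X - Polynomial.C (y k))).degree + 1 := by
    simp [Polynomial.degree_prod, hcard]
  simpa [hmonic.leadingCoeff, Polynomial.eval_prod] using
    (Lagrange.leadingCoeff_eq_sum hx hdeg).symm

end FiniteSumsAndProducts

section Shift

theorem gzShift_apply (c : ℂ) (n j : ℕ) (γ : GZ) (a b : ℕ) :
    gzShift c n j γ a b = γ a b + if a = n ∧ b = j then c else 0 := by
  rw [add_ite, add_zero, gzShift]

theorem gzShift_self (c : ℂ) (n j : ℕ) (γ : GZ) : gzShift c n j γ n j = γ n j + c := by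
  simp [gzShift]

theorem gzShift_of_ne_row (c : ℂ) {a n : ℕ} (h : a ≠ n) (j : ℕ) (γ : GZ) :
    gzShift c n j γ a = γ a := by
  funext b
  simp [gzShift, h]

theorem gzShift_of_ne_col (c : ℂ) (a n : ℕ) {b j : ℕ} (h : b ≠ j) (γ : GZ) :
    gzShift c n j γ a b = γ a b := by
  simp [gzShift, h]

theorem sum_mul_sum_gzShift (c : ℂ) {s : Finset ℕ} {t : ℕ → Finset ℕ} (w : ℕ → ℂ) {n j : ℕ}
    (hn : n ∈ s) (hj : j ∈ t n) (γ : GZ) :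
    ∑ a ∈ s, w a * ∑ b ∈ t a, gzShift c n j γ a b =
      w n * c + ∑ a ∈ s, w a * ∑ b ∈ t a, γ a b := by
  have hδ : ∑ a ∈ s, w a * ∑ b ∈ t a, (if a = n ∧ b = j then c else 0) = w n * c := by
    rw [sum_eq_single_of_mem n hn fun a _ han => by simp [han]]
    simp [hj]
  simp only [gzShift_apply, sum_add_distrib, mul_add, hδ, add_comm]

end Shift

section GammaFactor

/-- The argument `x/(iℏ) + 1/2` of the Gamma functions in `w_N`, where `x` stands for a difference
`γ_{nk} - γ_{n+1,m}`. -/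
noncomputable def gammaArg (ℏ : ℝ) (x : ℂ) : ℂ := x / (Complex.I * ℏ) + 1 / 2

/-- The factor `ℏ^z Γ(z)`, `z = x/(iℏ) + 1/2`, of `s_n` attached to a difference
`x = γ_{nk} - γ_{n+1,m}`. -/
noncomputable def gammaFactor (ℏ : ℝ) (x : ℂ) : ℂ :=
  hpow ℏ (gammaArg ℏ x) * Complex.Gamma (gammaArg ℏ x)

theorem gammaArg_add_mul {ℏ : ℝ} (hℏ : ℏ ≠ 0) (x t : ℂ) :
    gammaArg ℏ (x + t * (Complex.I * ℏ)) = gammaArg ℏ x + t := by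
  have hIℏ : Complex.I * (ℏ : ℂ) ≠ 0 :=
    mul_ne_zero Complex.I_ne_zero (Complex.ofReal_ne_zero.mpr hℏ)
  rw [gammaArg, gammaArg, add_div, mul_div_cancel_right₀ _ hIℏ, add_right_comm]

theorem ofReal_mul_gammaArg {ℏ : ℝ} (hℏ : ℏ ≠ 0) (x : ℂ) :
    ℏ * gammaArg ℏ x = -Complex.I * (x + Complex.I * ℏ / 2) := by
  have hℏ' : (ℏ : ℂ) ≠ 0 := Complex.ofReal_ne_zero.mpr hℏ
  rw [gammaArg]
  field_simp
  linear_combination (2 * x + Complex.I * ℏ) * Complex.I_sq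

theorem hpow_add_one {ℏ : ℝ} (hℏ : 0 < ℏ) (z : ℂ) : hpow ℏ (z + 1) = ℏ * hpow ℏ z := by
  rw [hpow, hpow, add_one_mul, Complex.exp_add, ← Complex.ofReal_exp, Real.exp_log hℏ, mul_comm]

theorem gammaFactor_add {ℏ : ℝ} (hℏ : 0 < ℏ) {x : ℂ} (hx : gammaArg ℏ x ≠ 0) :
    gammaFactor ℏ (x + Complex.I * ℏ) =
      -Complex.I * (x + Complex.I * ℏ / 2) * gammaFactor ℏ x := by
  have harg : gammaArg ℏ (x + Complex.I * ℏ) = gammaArg ℏ x + 1 := by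
    simpa using gammaArg_add_mul hℏ.ne' x 1
  rw [gammaFactor, harg, hpow_add_one hℏ, Complex.Gamma_add_one _ hx, gammaFactor,
    ← ofReal_mul_gammaArg hℏ.ne']
  ring

theorem sub_mul_gammaFactor_sub {ℏ : ℝ} (hℏ : 0 < ℏ) {x : ℂ}
    (hx : gammaArg ℏ (x - Complex.I * ℏ) ≠ 0) :
    (x - Complex.I * ℏ / 2) * gammaFactor ℏ (x - Complex.I * ℏ) =
      Complex.I * gammaFactor ℏ x := by
  have h := gammaFactor_add hℏ hx
  rw [sub_add_cancel] at h
  rw [h]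
  linear_combination
    (x - Complex.I * ℏ / 2) * gammaFactor ℏ (x - Complex.I * ℏ) * Complex.I_sq

end GammaFactor

section RowFactor

theorem sW_eq_prod_gammaFactor (ℏ : ℝ) (n : ℕ) (γ : GZ) :
    sW ℏ n γ = ∏ k ∈ Icc 1 n, ∏ m ∈ Icc 1 (n + 1), gammaFactor ℏ (γ n k - γ (n + 1) m) :=
  rfl

theorem sW_gzShift_of_ne (ℏ : ℝ) (c : ℂ) {a n : ℕ} (h : a ≠ n) (h' : a + 1 ≠ n) (j : ℕ) (γ : GZ) :
    sW ℏ a (gzShift c n j γ) = sW ℏ a γ := by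
  simp only [sW, gzShift_of_ne_row c h, gzShift_of_ne_row c h']

theorem prod_sub_mul_sW_gzShift {ℏ : ℝ} (hℏ : 0 < ℏ) {n j : ℕ} (hj : j ∈ Icc 1 n) {γ : GZ}
    (h : ∀ m ∈ Icc 1 (n + 1), gammaArg ℏ (γ n j - γ (n + 1) m - Complex.I * ℏ) ≠ 0) :
    (∏ r ∈ Icc 1 (n + 1), (γ n j - γ (n + 1) r - Complex.I * ℏ / 2)) *
      sW ℏ n (gzShift (-(Complex.I * ℏ)) n j γ) = Complex.I ^ (n + 1) * sW ℏ n γ := by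
  simp only [sW_eq_prod_gammaFactor, gzShift_of_ne_row _ n.succ_ne_self]
  refine mul_prod_eq_mul_prod_of_subset (singleton_subset_iff.mpr hj) ?_ fun k hk => ?_
  · have hI : ∏ _r ∈ Icc 1 (n + 1), Complex.I = Complex.I ^ (n + 1) := by simp
    rw [prod_singleton, prod_singleton, ← hI, ← prod_mul_distrib, ← prod_mul_distrib]
    refine prod_congr rfl fun m hm => ?_
    rw [gzShift_self, ← sub_eq_add_neg, sub_right_comm _ (Complex.I * (ℏ : ℂ)),
      sub_mul_gammaFactor_sub hℏ (h m hm)]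
  · rw [gzShift_of_ne_col _ _ _ (notMem_singleton.mp (mem_sdiff.mp hk).2)]

theorem sW_gzShift_succ {ℏ : ℝ} (hℏ : 0 < ℏ) {n j : ℕ} (hj : j ∈ Icc 1 (n + 1)) {γ : GZ}
    (h : ∀ k ∈ Icc 1 n, gammaArg ℏ (γ n k - γ (n + 1) j) ≠ 0) :
    sW ℏ n (gzShift (-(Complex.I * ℏ)) (n + 1) j γ) =
      Complex.I ^ n * (∏ k ∈ Icc 1 n, (γ (n + 1) j - γ n k - Complex.I * ℏ / 2)) *
        sW ℏ n γ := by
  have hI : ∏ _k ∈ Icc 1 n, Complex.I = Complex.I ^ n := by simp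
  simp only [sW_eq_prod_gammaFactor, gzShift_of_ne_row _ n.succ_ne_self.symm]
  rw [← hI, ← prod_mul_distrib, ← prod_mul_distrib]
  refine prod_congr rfl fun k hk => ?_
  rw [← one_mul (∏ m ∈ Icc 1 (n + 1), _)]
  refine mul_prod_eq_mul_prod_of_subset (singleton_subset_iff.mpr hj) ?_ fun m hm => ?_
  · rw [prod_singleton, prod_singleton, one_mul, gzShift_self, ← sub_sub, sub_neg_eq_add,
      gammaFactor_add hℏ (h k hk)]
    ring
  · rw [gzShift_of_ne_col _ _ _ (notMem_singleton.mp (mem_sdiff.mp hm).2)]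

end RowFactor

section WhittakerVector

/-- The exponential prefactor of `w_N`. -/
noncomputable def wPrefactor (ℏ : ℝ) (N : ℕ) (γ : GZ) : ℂ :=
  Complex.exp (-((Real.pi / ℏ : ℝ) : ℂ) *
    ∑ n ∈ Icc 1 (N - 1), ((n : ℂ) - 1) * ∑ j ∈ Icc 1 n, γ n j)

/-- `γ` is not a pole of `w_N`: no Gamma function in `w_N` is evaluated at a nonpositive integer,
where `Complex.Gamma` has the junk value `0`. -/
def PoleFree (ℏ : ℝ) (N : ℕ) (γ : GZ) : Prop :=
  ∀ n ∈ Icc 1 (N - 1), ∀ k ∈ Icc 1 n, ∀ m ∈ Icc 1 (n + 1),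
    ∀ p : ℕ, gammaArg ℏ (γ n k - γ (n + 1) m) ≠ -p

/-- No Gamma function in `w_N` is evaluated at an integer. In contrast to `PoleFree`, this is
invariant under the shifts of `γ` by multiples of `iℏ`. -/
def NonIntegral (ℏ : ℝ) (N : ℕ) (γ : GZ) : Prop :=
  ∀ n ∈ Icc 1 (N - 1), ∀ k ∈ Icc 1 n, ∀ m ∈ Icc 1 (n + 1),
    ∀ z : ℤ, gammaArg ℏ (γ n k - γ (n + 1) m) ≠ z

theorem NonIntegral.poleFree {ℏ : ℝ} {N : ℕ} {γ : GZ} (h : NonIntegral ℏ N γ) :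
    PoleFree ℏ N γ :=
  fun n hn k hk m hm p => by simpa using h n hn k hk m hm (-p)

theorem nonIntegral_gzShift {ℏ : ℝ} (hℏ : ℏ ≠ 0) {N : ℕ} {γ : GZ} (h : NonIntegral ℏ N γ)
    (t : ℤ) (n j : ℕ) : NonIntegral ℏ N (gzShift (t * (Complex.I * ℏ)) n j γ) := by
  intro a ha k hk m hm z hz
  set δ : ℕ → ℕ → ℤ := fun a b => if a = n ∧ b = j then t else 0 with hδ
  have hshift : ∀ a b, gzShift (t * (Complex.I * ℏ)) n j γ a b =
      γ a b + δ a b * (Complex.I * ℏ) := fun a b => by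
    rw [gzShift_apply]
    by_cases hab : a = n ∧ b = j <;> simp [hδ, hab]
  refine h a ha k hk m hm (z - (δ a k - δ (a + 1) m)) ?_
  push_cast
  rw [← hz, hshift, hshift, add_sub_add_comm, ← sub_mul, gammaArg_add_mul hℏ, add_sub_cancel_right]

theorem NonResonant.injOn {ℏ : ℝ} {N n : ℕ} {γ : GZ} (hγ : NonResonant ℏ N γ)
    (hn : n ∈ Icc 1 (N - 1)) : Set.InjOn (γ n) (Icc 1 n) := by
  have hne : ∀ j s, 1 ≤ j → j < s → s ≤ n → γ n j ≠ γ n s := fun j s hj hjs hs heq =>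
    hγ n hn j s hj hjs hs 0 (by simp [heq])
  intro j hj s hs heq
  obtain ⟨hj1, hjn⟩ := mem_Icc.mp hj
  obtain ⟨hs1, hsn⟩ := mem_Icc.mp hs
  rcases lt_trichotomy j s with hlt | rfl | hlt
  · exact absurd heq (hne j s hj1 hlt hsn)
  · rfl
  · exact absurd heq.symm (hne s j hs1 hlt hjn)

-- Including the empty row factor `s_0 = 1` spares a separate treatment of `n = 1`.
theorem wWhit_eq_wPrefactor_mul_prod_range (ℏ : ℝ) (N : ℕ) (γ : GZ) :
    wWhit ℏ N γ = wPrefactor ℏ N γ * ∏ n ∈ range N, sW ℏ n γ := by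
  rw [wWhit, wPrefactor]
  congr 1
  refine prod_subset (fun n hn => ?_) fun n hn hn' => ?_
  · simp only [mem_Icc, mem_range] at hn ⊢
    omega
  · obtain rfl : n = 0 := by
      simp only [mem_Icc, mem_range] at hn hn'
      omega
    simp [sW]

theorem wPrefactor_gzShift (ℏ : ℝ) (c : ℂ) {N n j : ℕ} (hn : n ∈ Icc 1 (N - 1))
    (hj : j ∈ Icc 1 n) (γ : GZ) :
    wPrefactor ℏ N (gzShift c n j γ) =
      Complex.exp (-((Real.pi / ℏ : ℝ) : ℂ) * (((n : ℂ) - 1) * c)) * wPrefactor ℏ N γ := by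
  rw [wPrefactor, sum_mul_sum_gzShift c (fun a => (a : ℂ) - 1) hn hj, mul_add, Complex.exp_add,
    wPrefactor]

theorem wPrefactor_gzShift_neg {ℏ : ℝ} (hℏ : ℏ ≠ 0) {N p j : ℕ} (hp : p + 1 ∈ Icc 1 (N - 1))
    (hj : j ∈ Icc 1 (p + 1)) (γ : GZ) :
    wPrefactor ℏ N (gzShift (-(Complex.I * ℏ)) (p + 1) j γ) = (-1) ^ p * wPrefactor ℏ N γ := by
  have hℏ' : (ℏ : ℂ) ≠ 0 := Complex.ofReal_ne_zero.mpr hℏ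
  rw [wPrefactor_gzShift ℏ _ hp hj, ← Complex.exp_pi_mul_I, ← Complex.exp_nat_mul]
  congr 2
  push_cast
  field_simp
  ring

theorem neg_one_pow_mul_I_pow_mul_I_pow (p : ℕ) :
    (-1 : ℂ) ^ p * (Complex.I ^ (p + 2) * Complex.I ^ p) = -1 := by
  have hsq : Complex.I ^ (p + 2) * Complex.I ^ p = (-1) ^ p * -1 := by
    rw [← Complex.I_sq, ← pow_mul]
    ring
  rw [hsq, ← mul_assoc, ← mul_pow, neg_one_mul, neg_neg, one_pow, one_mul]

theorem prod_mul_wWhit_gzShift {ℏ : ℝ} (hℏ : 0 < ℏ) {N p j : ℕ} (hp : p + 1 ∈ Icc 1 (N - 1))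
    (hj : j ∈ Icc 1 (p + 1)) {γ : GZ} (hγ : PoleFree ℏ N γ)
    (hshift : PoleFree ℏ N (gzShift (-(Complex.I * ℏ)) (p + 1) j γ)) :
    (∏ r ∈ Icc 1 (p + 2), (γ (p + 1) j - γ (p + 2) r - Complex.I * ℏ / 2)) *
        wWhit ℏ N (gzShift (-(Complex.I * ℏ)) (p + 1) j γ) =
      (∏ k ∈ Icc 1 p, (γ (p + 1) j - γ p k - Complex.I * ℏ / 2)) * -wWhit ℏ N γ := by
  have hpN : p + 1 < N := by
    have := (mem_Icc.mp hp).2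
    omega
  have hlower := prod_sub_mul_sW_gzShift hℏ hj (γ := γ) fun m hm => by
    simpa [gzShift_self, gzShift_of_ne_row, ← sub_eq_add_neg, sub_right_comm]
      using hshift (p + 1) hp j hj m hm 0
  have hupper := sW_gzShift_succ hℏ hj (γ := γ) fun k hk => by
    have hpIcc : p ∈ Icc 1 (N - 1) := by
      simp only [mem_Icc] at hk ⊢
      omega
    simpa using hγ p hpIcc k hk j hj 0
  set A := ∏ r ∈ Icc 1 (p + 2), (γ (p + 1) j - γ (p + 2) r - Complex.I * ℏ / 2)
  set B := ∏ k ∈ Icc 1 p, (γ (p + 1) j - γ p k - Complex.I * ℏ / 2)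
  set γ' := gzShift (-(Complex.I * ℏ)) (p + 1) j γ
  have hprod : A * ∏ n ∈ range N, sW ℏ n γ' =
      Complex.I ^ (p + 2) * Complex.I ^ p * B * ∏ n ∈ range N, sW ℏ n γ := by
    refine mul_prod_eq_mul_prod_of_subset (t := {p, p + 1}) ?_ ?_ fun n hn => ?_
    · simp [insert_subset_iff, hpN, p.lt_succ_self.trans hpN]
    · rw [prod_pair p.succ_ne_self.symm, prod_pair p.succ_ne_self.symm, hupper]
      linear_combination Complex.I ^ p * B * sW ℏ p γ * hlower
    · simp only [mem_sdiff, mem_insert, mem_singleton, not_or] at hn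
      exact sW_gzShift_of_ne _ _ hn.2.2 (fun h => hn.2.1 (Nat.succ_injective h)) _ _
  rw [wWhit_eq_wPrefactor_mul_prod_range, wWhit_eq_wPrefactor_mul_prod_range,
    wPrefactor_gzShift_neg hℏ.ne' hp hj]
  linear_combination (-1) ^ p * wPrefactor ℏ N γ * hprod +
    B * wPrefactor ℏ N γ * (∏ n ∈ range N, sW ℏ n γ) * neg_one_pow_mul_I_pow_mul_I_pow p

theorem sum_raising_wWhit {ℏ : ℝ} (hℏ : 0 < ℏ) {N n : ℕ} (hn : n ∈ Icc 1 (N - 1)) {γ : GZ}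
    (hinj : Set.InjOn (γ n) (Icc 1 n)) (hγ : PoleFree ℏ N γ)
    (hshift : ∀ j ∈ Icc 1 n, PoleFree ℏ N (gzShift (-(Complex.I * ℏ)) n j γ)) :
    ∑ j ∈ Icc 1 n,
      ((∏ r ∈ Icc 1 (n + 1), (γ n j - γ (n + 1) r - Complex.I * ℏ / 2)) /
        ∏ s ∈ (Icc 1 n).erase j, (γ n j - γ n s)) *
        wWhit ℏ N (gzShift (-(Complex.I * ℏ)) n j γ) = -wWhit ℏ N γ := by
  obtain ⟨p, rfl⟩ := Nat.exists_eq_add_of_le' (mem_Icc.mp hn).1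
  calc
    _ = ∑ j ∈ Icc 1 (p + 1), (∏ k ∈ Icc 1 p, (γ (p + 1) j - (γ p k + Complex.I * ℏ / 2))) /
          (∏ s ∈ (Icc 1 (p + 1)).erase j, (γ (p + 1) j - γ (p + 1) s)) * -wWhit ℏ N γ := by
      refine sum_congr rfl fun j hj => ?_
      simp only [← sub_sub]
      rw [div_mul_eq_mul_div, prod_mul_wWhit_gzShift hℏ hn hj hγ (hshift j hj),
        div_mul_eq_mul_div]
    _ = -wWhit ℏ N γ := by
      rw [← sum_mul, sum_prod_sub_div_prod_erase_sub (by simp) hinj, one_mul]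

theorem one_div_I_mul (z : ℂ) : 1 / (Complex.I * z) = -(Complex.I * z⁻¹) := by
  rw [one_div, mul_inv, Complex.inv_I, neg_mul]

theorem Elower_wWhit' (ℏ : ℝ) {n : ℕ} (hn : 1 ≤ n) {γ : GZ}
    (hinj : Set.InjOn (γ n) (Icc 1 n)) :
    Elower ℏ n wWhit' γ = -(Complex.I * (ℏ : ℂ)⁻¹) * wWhit' γ := by
  have hsum := sum_prod_sub_div_prod_erase_sub (t := Icc 1 (n - 1))
    (by simp only [Nat.card_Icc]; omega) hinj fun r => γ (n - 1) r - Complex.I * ℏ / 2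
  simp only [← sub_add] at hsum
  simp only [Elower, wWhit', mul_one, hsum, one_div_I_mul]

end WhittakerVector

theorem whittaker_vector_wN_general {ℏ : ℝ} (hℏ : 0 < ℏ) {N n : ℕ} (hn : n ∈ Icc 1 (N - 1))
    {γ : GZ} (hinj : Set.InjOn (γ n) (Icc 1 n)) (hγ : PoleFree ℏ N γ)
    (hshift : ∀ j ∈ Icc 1 n, PoleFree ℏ N (gzShift (-(Complex.I * ℏ)) n j γ)) :
    Eraise ℏ n (wWhit ℏ N) γ = -(Complex.I * (ℏ : ℂ)⁻¹) * wWhit ℏ N γ ∧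
    ∑ j ∈ Icc 1 n,
      ((∏ r ∈ Icc 1 (n + 1), (γ n j - γ (n + 1) r - Complex.I * ℏ / 2)) /
        ∏ s ∈ (Icc 1 n).erase j, (γ n j - γ n s)) *
        wWhit ℏ N (gzShift (-(Complex.I * ℏ)) n j γ) = -wWhit ℏ N γ ∧
    Elower ℏ n wWhit' γ = -(Complex.I * (ℏ : ℂ)⁻¹) * wWhit' γ := by
  have hsum := sum_raising_wWhit hℏ hn hinj hγ hshift
  refine ⟨?_, hsum, Elower_wWhit' ℏ (mem_Icc.mp hn).1 hinj⟩
  rw [Eraise, hsum, neg_mul_neg, one_div_I_mul]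

/-- `w_N` and `w'_N = 1` are Whittaker vectors with all eigenvalues `-i ℏ⁻¹ = (iℏ)⁻¹`:
`(E_{n,n+1} w_N)(γ) = -iℏ⁻¹ w_N(γ)`, explicitly
`Σ_j [∏_r (γ_{nj} - γ_{n+1,r} - iℏ/2) / ∏_{s≠j} (γ_{nj} - γ_{ns})] · w_N(γ - iℏ e_{nj}) = -w_N(γ)`,
and `(E_{n+1,n} w'_N)(γ) = -iℏ⁻¹ w'_N(γ)`. -/
theorem whittaker_vector_wN (ℏ : ℝ) (hℏ : 0 < ℏ) (N : ℕ) (hN : 2 ≤ N)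
    (γ : GZ) (hγ : NonResonant ℏ N γ)
    (hγ' : ∀ n ∈ Icc 1 (N - 1), ∀ k ∈ Icc 1 n, ∀ m ∈ Icc 1 (n + 1),
      ∀ z : ℤ, (γ n k - γ (n + 1) m) / (Complex.I * ℏ) + 1 / 2 ≠ (z : ℂ)) :
    ∀ n : ℕ, 1 ≤ n → n ≤ N - 1 →
      Eraise ℏ n (wWhit ℏ N) γ = -(Complex.I * (ℏ : ℂ)⁻¹) * wWhit ℏ N γ ∧
      ∑ j ∈ Icc 1 n,
        ((∏ r ∈ Icc 1 (n + 1), (γ n j - γ (n + 1) r - Complex.I * ℏ / 2)) /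
          ∏ s ∈ (Icc 1 n).erase j, (γ n j - γ n s)) *
          wWhit ℏ N (gzShift (-(Complex.I * ℏ)) n j γ) = -wWhit ℏ N γ ∧
      Elower ℏ n wWhit' γ = -(Complex.I * (ℏ : ℂ)⁻¹) * wWhit' γ := by
  refine fun n hn hnN => whittaker_vector_wN_general hℏ (mem_Icc.mpr ⟨hn, hnN⟩)
    (hγ.injOn (mem_Icc.mpr ⟨hn, hnN⟩)) (NonIntegral.poleFree hγ') fun j _ => ?_
  simpa using (nonIntegral_gzShift hℏ.ne' hγ' (-1) n j).poleFree
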